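/- Let X and Y be T0 Alexandroff spaces and let f, g : X → Y be continuous maps such that f(x) ∼ g(x) (f(x) and g(x) are comparable in the specialization order of Y) for every x ∈ X. Then f is homotopic to g by a homotopy that is constant on the set {x ∈ X : f(x) = g(x)}. -/

import Mathlib

/-- Specialization order on a topological space: `x ≤ y` iff `y ∈ closure {x}`. -/
def specLE {X : Type*} [TopologicalSpace X] (x y : X) : Prop := y ∈ closure ({x} : Set X)

/-- Comparability in the specialization order. -/
def specComp {X : Type*} [TopologicalSpace X] (x y : X) : Prop := specLE x y ∨ specLE y x

/-!
The pointwise minimum `m` of `f` and `g` is continuous: `m x` lies in an open set `U` iff `f x` or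
`g x` does, so `m ⁻¹' U = f ⁻¹' U ∪ g ⁻¹' U`. Whenever `m ≤ f` pointwise, the map that is `m` at
times `t < 1` and `f` at `t = 1` is a homotopy from `m` to `f`, constant where `m` and `f` agree.
Hence `f` and `g` are both homotopic to `m`.
-/

section

variable {X Y : Type*} [TopologicalSpace X] [TopologicalSpace Y]

theorem specLE_iff_specializes {x y : X} : specLE x y ↔ x ⤳ y :=
  specializes_iff_mem_closure.symm

open Classical in
/-- The smaller of two points comparable in the specialization order, used to form the pointwise
minimum of two maps. The value is `y` when `x` and `y` are incomparable. -/
noncomputable def specMin (x y : X) : X := if x ⤳ y then x else y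

@[simp]
theorem specMin_self (x : X) : specMin x x = x := ite_self x

theorem specMin_eq_or_eq (x y : X) : specMin x y = x ∨ specMin x y = y := by
  classical exact ite_eq_or_eq _ x y

theorem specMin_specializes_right (x y : X) : specMin x y ⤳ y := by
  unfold specMin
  split_ifs with hxy
  · exact hxy
  · exact specializes_rfl

theorem specMin_specializes_left {x y : X} (h : specComp x y) : specMin x y ⤳ x := by
  unfold specMin
  split_ifs with hxy
  · exact specializes_rfl
  · simpa only [specComp, specLE_iff_specializes, hxy, false_or] using h

theorem specMin_mem_iff {x y : X} {U : Set X} (h : specComp x y) (hU : IsOpen U) :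
    specMin x y ∈ U ↔ x ∈ U ∨ y ∈ U := by
  constructor
  · intro hm
    rcases specMin_eq_or_eq x y with hx | hy
    · exact Or.inl (hx ▸ hm)
    · exact Or.inr (hy ▸ hm)
  · rintro (hx | hy)
    · exact (specMin_specializes_left h).mem_open hU hx
    · exact (specMin_specializes_right x y).mem_open hU hy

theorem continuous_specMin {f g : X → Y} (hf : Continuous f) (hg : Continuous g)
    (h : ∀ x, specComp (f x) (g x)) : Continuous fun x ↦ specMin (f x) (g x) := by
  refine continuous_def.2 fun U hU ↦ ?_
  have preimage_eq : (fun x ↦ specMin (f x) (g x)) ⁻¹' U = f ⁻¹' U ∪ g ⁻¹' U :=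
    Set.ext fun x ↦ specMin_mem_iff (h x) hU
  rw [preimage_eq]
  exact (hU.preimage hf).union (hU.preimage hg)

open Classical in
theorem homotopicRel_of_specializes {f g : C(X, Y)} {S : Set X} (h : ∀ x, f x ⤳ g x)
    (hS : Set.EqOn f g S) : f.HomotopicRel g S := by
  let beforeEnd : Set (unitInterval × X) := {p | p.1 < 1}
  have isOpen_beforeEnd : IsOpen beforeEnd := isOpen_lt continuous_fst continuous_const
  let H : C(unitInterval × X, Y) :=
    ⟨beforeEnd.piecewise (fun p ↦ f p.2) fun p ↦ g p.2,
      isOpen_beforeEnd.continuous_piecewise_of_specializes (by fun_prop) (by fun_prop)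
        fun p ↦ h p.2⟩
  have H_apply (t : unitInterval) (x : X) : H (t, x) = if t < 1 then f x else g x := rfl
  refine ⟨⟨⟨H, fun x ↦ ?_, fun x ↦ ?_⟩, fun t x hx ↦ ?_⟩⟩
  · exact (H_apply 0 x).trans (if_pos zero_lt_one)
  · exact (H_apply 1 x).trans (if_neg (lt_irrefl 1))
  · exact (H_apply t x).trans (by rw [← hS hx, ite_self])

theorem stmt12_general (f g : C(X, Y)) (h : ∀ x, specComp (f x) (g x)) :
    f.HomotopicRel g {x | f x = g x} := by
  let m : C(X, Y) := ⟨fun x ↦ specMin (f x) (g x), continuous_specMin f.continuous g.continuous h⟩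
  have m_eq_right : Set.EqOn m g {x | f x = g x} := fun x (hx : f x = g x) ↦ by
    simp only [m, ContinuousMap.coe_mk, hx, specMin_self]
  have m_eq_left : Set.EqOn m f {x | f x = g x} := fun x hx ↦ (m_eq_right hx).trans hx.symm
  have m_to_left : m.HomotopicRel f {x | f x = g x} :=
    homotopicRel_of_specializes (fun x ↦ specMin_specializes_left (h x)) m_eq_left
  have m_to_right : m.HomotopicRel g {x | f x = g x} :=
    homotopicRel_of_specializes (fun x ↦ specMin_specializes_right (f x) (g x)) m_eq_right
  exact m_to_left.symm.trans m_to_right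

end

/-- If `f, g : X → Y` are continuous maps between T0 Alexandroff spaces with `f(x)` and
`g(x)` comparable for all `x`, then `f` and `g` are homotopic rel the set where they
agree. -/
theorem stmt12 {X Y : Type*} [TopologicalSpace X] [AlexandrovDiscrete X] [T0Space X]
    [TopologicalSpace Y] [AlexandrovDiscrete Y] [T0Space Y]
    (f g : C(X, Y)) (h : ∀ x, specComp (f x) (g x)) :
    f.HomotopicRel g {x | f x = g x} :=
  stmt12_general f g h
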